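/- Assume A_{∂I}ᵀA_{∂I} is invertible, so F has a unique minimizer x(y). Then P(X_β ∈ {x ∈ ℝ^p : xᵢξᵢ > 0 for all i ∈ ∂I₀}) → 1 as β → +∞; that is, with probability tending to one, every component of X_β indexed by ∂I₀ has the sign of ξᵢ. -/

import Mathlib

open MeasureTheory

/-!
Write `ν` for the law of `X_β`. If an affine map `T` raises the log-density of `ν` by at least `a`
on a set `s`, then `ν s ≤ |det T|⁻¹ * exp (-a)`. This is applied to two maps.

* With `T` the contraction by `1 / 2` towards the minimizer `x₀`, convexity of `F` shows that
  `{x | F x₀ + δ ≤ F x}` has mass at most `2 ^ p * exp (-β * δ)`.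
* With `T` flipping the sign of the `k`-th coordinate and stretching it by a factor `l`: flipping
  `x k` from the sign opposite to `ξ k = ± 1` to the sign of `ξ k` lowers `F` by `2 * |x k|`, up to
  an error of `|x k|` times a quantity linear in `A (x - x₀)` and `x k`, both of which are small
  where `F x - F x₀` is. So `T` does not increase `F` on `{x | x k * ξ k ≤ 0 ∧ F x < F x₀ + δ}`
  once `δ` is small in terms of `l`, and the mass of this set is at most `1 / l`.

Letting `β → ∞` and then `l → ∞`, the coordinate `k` has the wrong sign with vanishing probability.
-/

open Filter Set Topology
open scoped ENNReal Matrix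

section Tilted

lemma tilted_apply_le_of_map_eq_smul {α : Type*} [MeasurableSpace α] {μ : Measure α} {T : α → α}
    (hT : MeasurableEmbedding T) {c : ℝ≥0∞} (hmap : μ.map T = c • μ) {g : α → ℝ} {a : ℝ}
    {s : Set α} (hs : MeasurableSet s) (hg : ∀ x ∈ s, g x + a ≤ g (T x)) :
    μ.tilted g s ≤ c * ENNReal.ofReal (Real.exp (-a)) := by
  set ρ : α → ℝ≥0∞ := fun x => ENNReal.ofReal (Real.exp (g x) / ∫ z, Real.exp (g z) ∂μ) with hρ
  have hρT : ∀ x ∈ s, ρ x ≤ ENNReal.ofReal (Real.exp (-a)) * ρ (T x) := fun x hx => by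
    rw [hρ, ← ENNReal.ofReal_mul (Real.exp_pos _).le, ← mul_div_assoc, ← Real.exp_add]
    refine ENNReal.ofReal_le_ofReal (div_le_div_of_nonneg_right ?_ ?_)
    · exact Real.exp_le_exp.2 (by linarith [hg x hx])
    · exact integral_nonneg fun _ => (Real.exp_pos _).le
  calc μ.tilted g s = ∫⁻ x in s, ρ x ∂μ := tilted_apply' μ g hs
    _ ≤ ∫⁻ x in s, ENNReal.ofReal (Real.exp (-a)) * ρ (T x) ∂μ := setLIntegral_mono' hs hρT
    _ ≤ ∫⁻ x, ENNReal.ofReal (Real.exp (-a)) * ρ (T x) ∂μ := setLIntegral_le_lintegral _ _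
    _ = ENNReal.ofReal (Real.exp (-a)) * ∫⁻ x, ρ x ∂(μ.map T) := by
        rw [lintegral_const_mul' _ _ ENNReal.ofReal_ne_top, hT.lintegral_map]
    _ = ENNReal.ofReal (Real.exp (-a)) * (c * μ.tilted g univ) := by
        rw [hmap, lintegral_smul_measure, tilted_apply' μ g MeasurableSet.univ, setLIntegral_univ,
          smul_eq_mul]
    _ ≤ ENNReal.ofReal (Real.exp (-a)) * (c * 1) := by gcongr; exact prob_le_one
    _ = c * ENNReal.ofReal (Real.exp (-a)) := by rw [mul_one, mul_comm]

variable {E : Type*} [NormedAddCommGroup E] [NormedSpace ℝ E] [FiniteDimensional ℝ E]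
  [MeasurableSpace E] [BorelSpace E] {μ : Measure E} [μ.IsAddHaarMeasure]

lemma tilted_apply_le_of_le_comp_add_linearMap {L : E →ₗ[ℝ] E} (hL : LinearMap.det L ≠ 0) (b : E)
    {g : E → ℝ} {a : ℝ} {s : Set E} (hs : MeasurableSet s)
    (hg : ∀ x ∈ s, g x + a ≤ g (b + L x)) :
    μ.tilted g s ≤ ENNReal.ofReal |(LinearMap.det L)⁻¹| * ENNReal.ofReal (Real.exp (-a)) := by
  have hLm : Measurable L := L.continuous_of_finiteDimensional.measurable
  have hT : MeasurableEmbedding fun x => b + L x :=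
    (measurableEmbedding_addLeft b).comp
      (LinearMap.equivOfDetNeZero L hL).toContinuousLinearEquiv.toHomeomorph.measurableEmbedding
  refine tilted_apply_le_of_map_eq_smul hT ?_ hs hg
  calc μ.map (fun x => b + L x) = (μ.map L).map (b + ·) :=
        (Measure.map_map (measurable_const_add b) hLm).symm
    _ = ENNReal.ofReal |(LinearMap.det L)⁻¹| • μ := by
        rw [Measure.map_linearMap_addHaar_eq_smul_addHaar μ hL, Measure.map_smul,
          map_add_left_eq_self]

lemma tilted_setOf_add_le_of_concaveOn {g : E → ℝ} (hg : ConcaveOn ℝ univ g) (x₀ : E) (a : ℝ) :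
    μ.tilted g {x | g x + a ≤ g x₀} ≤
      2 ^ Module.finrank ℝ E * ENNReal.ofReal (Real.exp (-(a / 2))) := by
  have hdet : LinearMap.det ((1 / 2 : ℝ) • (LinearMap.id : E →ₗ[ℝ] E)) =
      (1 / 2) ^ Module.finrank ℝ E := by
    rw [LinearMap.det_smul, LinearMap.det_id, mul_one]
  have hgm : Measurable g := (continuousOn_univ.1 (hg.continuousOn isOpen_univ)).measurable
  have hdet_ne : LinearMap.det ((1 / 2 : ℝ) • (LinearMap.id : E →ₗ[ℝ] E)) ≠ 0 := by
    rw [hdet]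
    positivity
  refine (tilted_apply_le_of_le_comp_add_linearMap hdet_ne ((1 / 2 : ℝ) • x₀)
    (measurableSet_le (hgm.add_const a) measurable_const) (a := a / 2) fun x hx => ?_).trans ?_
  · have hmid := hg.2 (mem_univ x₀) (mem_univ x) (show (0 : ℝ) ≤ 1 / 2 by norm_num)
      (show (0 : ℝ) ≤ 1 / 2 by norm_num) (by norm_num)
    simp only [smul_eq_mul, mem_ofPred_eq] at hmid hx
    simp only [LinearMap.smul_apply, LinearMap.id_apply]
    linarith
  · rw [hdet, ← inv_pow, one_div, inv_inv, abs_of_pos (by positivity),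
      ENNReal.ofReal_pow zero_le_two, ENNReal.ofReal_ofNat]

end Tilted

lemma integrable_exp_neg_mul_sum_abs {ι : Type*} [Fintype ι] {c : ℝ} (hc : 0 < c) :
    Integrable fun x : ι → ℝ => Real.exp (-(c * ∑ i, |x i|)) := by
  have hreal : Integrable fun t : ℝ => Real.exp (-c * |t|) := by
    refine .of_integral_ne_zero ?_
    rw [integral_comp_abs (f := fun t => Real.exp (-c * t)),
      integral_exp_mul_Ioi (neg_lt_zero.2 hc)]
    simp [hc.ne']
  have hprod : Integrable fun x : ι → ℝ => ∏ i, Real.exp (-c * |x i|) :=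
    Integrable.fintype_prod fun _ => hreal
  simpa only [← Real.exp_sum, neg_mul, Finset.sum_neg_distrib, ← Finset.mul_sum] using hprod

lemma nonneg_of_forall_nonneg_mul_add_sq_mul {b c : ℝ}
    (h : ∀ t : ℝ, 0 < t → t ≤ 1 → 0 ≤ t * b + t ^ 2 * c) : 0 ≤ b := by
  have hlim : Tendsto (fun t : ℝ => b + t * c) (𝓝[>] 0) (𝓝 b) :=
    tendsto_nhdsWithin_of_tendsto_nhds (Continuous.tendsto' (by fun_prop) _ _ (by simp))
  refine ge_of_tendsto hlim ?_
  filter_upwards [Ioc_mem_nhdsGT zero_lt_one] with t ht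
  exact nonneg_of_mul_nonneg_right (by linarith [h t ht.1 ht.2] : 0 ≤ t * (b + t * c)) ht.1

lemma convexOn_sum_abs {ι : Type*} [Fintype ι] :
    ConvexOn ℝ univ fun x : ι → ℝ => ∑ i, |x i| := by
  refine ⟨convex_univ, fun x _ z _ a b ha hb _ => ?_⟩
  simp only [smul_eq_mul, Finset.mul_sum, ← Finset.sum_add_distrib, Pi.add_apply, Pi.smul_apply]
  refine Finset.sum_le_sum fun i _ => (abs_add_le _ _).trans_eq ?_
  rw [abs_mul, abs_mul, abs_of_nonneg ha, abs_of_nonneg hb]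

lemma sum_abs_add_single {ι : Type*} [Fintype ι] [DecidableEq ι] (x : ι → ℝ) (k : ι) (τ : ℝ) :
    ∑ i, |(x + Pi.single k τ : ι → ℝ) i| = ∑ i, |x i| + (|x k + τ| - |x k|) := by
  rw [← sub_eq_iff_eq_add', ← Finset.sum_sub_distrib,
    Fintype.sum_eq_single k fun i hi => by simp [hi], Pi.add_apply, Pi.single_eq_same]

/-- The linear map multiplying the `k`-th coordinate by `-l` and fixing the others, the change of
variables that corrects the sign of `x k`. It is encoded as a transvection, whose determinant is
known. -/
def coordFlip {ι : Type*} [DecidableEq ι] (k : ι) (l : ℝ) : (ι → ℝ) →ₗ[ℝ] ι → ℝ :=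
  LinearMap.transvection (LinearMap.proj k) (Pi.single k (-(1 + l)))

lemma coordFlip_apply {ι : Type*} [DecidableEq ι] (k : ι) (l : ℝ) (x : ι → ℝ) :
    coordFlip k l x = x + Pi.single k (-(1 + l) * x k) := by
  rw [coordFlip, LinearMap.transvection.apply, LinearMap.proj_apply, ← Pi.single_smul,
    smul_eq_mul, mul_comm (x k)]

lemma det_coordFlip {ι : Type*} [Finite ι] [DecidableEq ι] (k : ι) (l : ℝ) :
    LinearMap.det (coordFlip k l) = -l := by
  rw [coordFlip, LinearMap.transvection.det, LinearMap.proj_apply, Pi.single_eq_same]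
  ring

section Lasso

variable {ι κ : Type*} [Fintype ι] [Fintype κ] {A : Matrix κ ι ℝ} {y : κ → ℝ}

/-- The lasso objective `F(x) = ‖x‖₁ + ‖Ax - y‖² / 2`, with the norms written as sums because
functions carry the sup norm. -/
noncomputable def lasso (A : Matrix κ ι ℝ) (y : κ → ℝ) (x : ι → ℝ) : ℝ :=
  (∑ i, |x i|) + (∑ j, ((A *ᵥ x) j - y j) ^ 2) / 2

/-- The negative gradient `Aᵀ(y - Ax)` of the quadratic part of the lasso objective; at a minimizer
this is the vector `ξ`. -/
def lassoDual (A : Matrix κ ι ℝ) (y : κ → ℝ) (x : ι → ℝ) : ι → ℝ :=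
  Aᵀ *ᵥ (y - A *ᵥ x)

/-- The law of `X_β`, with density proportional to `exp (-2βF)`. It is the zero measure for `β ≤ 0`,
where the density is not integrable (unless `ι` is empty). -/
noncomputable def lassoPosterior (A : Matrix κ ι ℝ) (y : κ → ℝ) (β : ℝ) : Measure (ι → ℝ) :=
  volume.tilted fun x => -2 * β * lasso A y x

lemma continuous_lasso : Continuous (lasso A y) := by
  unfold lasso
  have : Continuous fun x : ι → ℝ => A *ᵥ x := by fun_prop
  fun_prop

lemma convexOn_lasso : ConvexOn ℝ univ (lasso A y) := by
  refine convexOn_sum_abs.add ⟨convex_univ, fun x _ z _ a b ha hb hab => ?_⟩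
  simp only [smul_eq_mul, ← mul_div_assoc, ← add_div, Finset.mul_sum, ← Finset.sum_add_distrib]
  gcongr with j
  have hb' : b = 1 - a := by linarith
  have := mul_nonneg (mul_nonneg ha hb) (sq_nonneg ((A *ᵥ x) j - (A *ᵥ z) j))
  simp only [Matrix.mulVec_add, Matrix.mulVec_smul, Pi.add_apply, Pi.smul_apply, smul_eq_mul]
  subst hb'
  linarith

lemma sum_abs_le_lasso (x : ι → ℝ) : ∑ i, |x i| ≤ lasso A y x :=
  le_add_of_nonneg_right (by positivity)

lemma isProbabilityMeasure_lassoPosterior {β : ℝ} (hβ : 0 < β) :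
    IsProbabilityMeasure (lassoPosterior A y β) := by
  refine isProbabilityMeasure_tilted ((integrable_exp_neg_mul_sum_abs (c := 2 * β)
    (by positivity)).mono' ?_ (.of_forall fun x => ?_))
  · exact (Real.continuous_exp.comp (continuous_lasso.const_mul _)).aestronglyMeasurable
  · rw [Real.norm_of_nonneg (Real.exp_pos _).le, neg_mul, neg_mul]
    gcongr
    exact sum_abs_le_lasso x

lemma lasso_add (x h : ι → ℝ) :
    lasso A y (x + h) = lasso A y x + (∑ i, |(x + h) i| - ∑ i, |x i|) - h ⬝ᵥ lassoDual A y x +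
      (∑ j, ((A *ᵥ h) j) ^ 2) / 2 := by
  have hcross : h ⬝ᵥ lassoDual A y x = ∑ j, (A *ᵥ h) j * (y j - (A *ᵥ x) j) := by
    rw [lassoDual, Matrix.dotProduct_mulVec, Matrix.vecMul_transpose]
    rfl
  have hsq : ∑ j, ((A *ᵥ (x + h)) j - y j) ^ 2 = ∑ j, ((A *ᵥ x) j - y j) ^ 2 -
      2 * ∑ j, (A *ᵥ h) j * (y j - (A *ᵥ x) j) + ∑ j, ((A *ᵥ h) j) ^ 2 := by
    rw [Finset.mul_sum, ← Finset.sum_sub_distrib, ← Finset.sum_add_distrib]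
    refine Finset.sum_congr rfl fun j _ => ?_
    rw [Matrix.mulVec_add, Pi.add_apply]
    ring
  rw [lasso, lasso, hcross, hsq]
  ring

lemma lasso_add_single [DecidableEq ι] (x : ι → ℝ) (k : ι) (τ : ℝ) :
    lasso A y (x + Pi.single k τ) = lasso A y x + (|x k + τ| - |x k|) - τ * lassoDual A y x k +
      τ ^ 2 * (∑ j, A j k ^ 2) / 2 := by
  rw [lasso_add, sum_abs_add_single, add_sub_cancel_left, single_dotProduct, Finset.mul_sum]
  simp [mul_pow, mul_comm]

lemma lassoDual_eq_sub (x x₀ : ι → ℝ) (k : ι) :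
    lassoDual A y x k = lassoDual A y x₀ k - ∑ j, A j k * (A *ᵥ (x - x₀)) j := by
  change _ = _ - (Aᵀ *ᵥ (A *ᵥ (x - x₀))) k
  simp only [lassoDual, Matrix.mulVec_sub, Pi.sub_apply]
  ring

lemma lasso_coordFlip_le [DecidableEq ι] {k : ι} {l : ℝ} (hl : 0 < l) {x x₀ : ι → ℝ}
    (hx : x k * lassoDual A y x₀ k ≤ 0) (hk : |lassoDual A y x₀ k| = 1)
    (hcross : ((1 + l) * ∑ j, A j k * (A *ᵥ (x - x₀)) j) ^ 2 ≤ 1)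
    (hcurv : (1 + l) ^ 2 * (∑ j, A j k ^ 2) * |x k| ≤ 1) :
    lasso A y (coordFlip k l x) ≤ lasso A y x := by
  have hsign : x k * lassoDual A y x₀ k = -|x k| := by
    rw [← neg_eq_iff_eq_neg, ← abs_of_nonpos hx, abs_mul, hk, mul_one]
  have habs : |x k + -(1 + l) * x k| = l * |x k| := by
    rw [show x k + -(1 + l) * x k = -(l * x k) by ring, abs_neg, abs_mul, abs_of_pos hl]
  rw [coordFlip_apply, lasso_add_single, habs, lassoDual_eq_sub x x₀]
  set q := ∑ j, A j k * (A *ᵥ (x - x₀)) j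
  set N := ∑ j, A j k ^ 2
  have hfirst : -((1 + l) * q * x k) ≤ |x k| :=
    calc -((1 + l) * q * x k) ≤ |(1 + l) * q| * |x k| := (neg_le_abs _).trans_eq (abs_mul _ _)
      _ ≤ |x k| := mul_le_of_le_one_left (abs_nonneg _) (sq_le_one_iff_abs_le_one _ |>.1 hcross)
  have hsecond : (1 + l) ^ 2 * N * x k ^ 2 ≤ |x k| :=
    calc (1 + l) ^ 2 * N * x k ^ 2 = (1 + l) ^ 2 * N * |x k| * |x k| := by
          rw [← sq_abs (x k)]
          ring
      _ ≤ |x k| := mul_le_of_le_one_left (abs_nonneg _) hcurv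
  calc lasso A y x + (l * |x k| - |x k|) - -(1 + l) * x k * (lassoDual A y x₀ k - q) +
        (-(1 + l) * x k) ^ 2 * N / 2
      = lasso A y x + (l - 1) * |x k| + (1 + l) * (x k * lassoDual A y x₀ k) +
          -((1 + l) * q * x k) + (1 + l) ^ 2 * N * x k ^ 2 / 2 := by ring
    _ ≤ lasso A y x := by
        rw [hsign]
        linarith [abs_nonneg (x k)]

lemma lassoPosterior_le_of_lasso_coordFlip_le [DecidableEq ι] {k : ι} {l : ℝ} (hl : 0 < l) {β : ℝ}
    (hβ : 0 ≤ β) {s : Set (ι → ℝ)} (hs : MeasurableSet s)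
    (hflip : ∀ x ∈ s, lasso A y (coordFlip k l x) ≤ lasso A y x) :
    lassoPosterior A y β s ≤ ENNReal.ofReal l⁻¹ := by
  have hdet_ne : LinearMap.det (coordFlip k l) ≠ 0 := by
    rw [det_coordFlip]
    exact neg_ne_zero.2 hl.ne'
  refine (tilted_apply_le_of_le_comp_add_linearMap hdet_ne 0 hs (a := 0) fun x hx => ?_).trans_eq ?_
  · rw [zero_add, add_zero]
    exact mul_le_mul_of_nonpos_left (hflip x hx) (by linarith)
  · rw [det_coordFlip, neg_zero, Real.exp_zero, ENNReal.ofReal_one, mul_one, abs_inv, abs_neg,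
      abs_of_pos hl]

lemma lassoPosterior_setOf_add_le_le (x₀ : ι → ℝ) {β : ℝ} (hβ : 0 ≤ β) (δ : ℝ) :
    lassoPosterior A y β {x | lasso A y x₀ + δ ≤ lasso A y x} ≤
      2 ^ Fintype.card ι * ENNReal.ofReal (Real.exp (-(β * δ))) := by
  have hconcave : ConcaveOn ℝ univ fun x : ι → ℝ => -2 * β * lasso A y x := by
    refine ((convexOn_lasso (A := A) (y := y)).smul (by positivity : 0 ≤ 2 * β)).neg.congr
      fun x _ => ?_
    simp only [Pi.neg_apply, smul_eq_mul, neg_mul]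
  have hmass := tilted_setOf_add_le_of_concaveOn (μ := volume) hconcave x₀ (2 * (β * δ))
  rw [Module.finrank_fintype_fun_eq_card, mul_div_cancel_left₀ _ two_ne_zero] at hmass
  refine (measure_mono fun x (hx : lasso A y x₀ + δ ≤ lasso A y x) => ?_).trans hmass
  change -2 * β * lasso A y x + 2 * (β * δ) ≤ -2 * β * lasso A y x₀
  linarith [mul_le_mul_of_nonneg_left hx hβ]

lemma tendsto_lassoPosterior_setOf_add_le (x₀ : ι → ℝ) {δ : ℝ} (hδ : 0 < δ) :
    Tendsto (fun β => lassoPosterior A y β {x | lasso A y x₀ + δ ≤ lasso A y x}) atTop (𝓝 0) := by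
  have hexp : Tendsto (fun β : ℝ => ENNReal.ofReal (Real.exp (-(β * δ)))) atTop (𝓝 0) := by
    rw [← ENNReal.ofReal_zero]
    exact ENNReal.tendsto_ofReal
      (Real.tendsto_exp_neg_atTop_nhds_zero.comp (tendsto_id.atTop_mul_const hδ))
  have hbound : Tendsto (fun β : ℝ => 2 ^ Fintype.card ι * ENNReal.ofReal (Real.exp (-(β * δ))))
      atTop (𝓝 0) := by
    simpa only [mul_zero] using ENNReal.Tendsto.const_mul hexp (.inr (by finiteness))
  refine tendsto_of_tendsto_of_tendsto_of_le_of_le' tendsto_const_nhds hbound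
    (.of_forall fun _ => zero_le) ?_
  filter_upwards [eventually_ge_atTop 0] with β hβ using lassoPosterior_setOf_add_le_le x₀ hβ δ

section Minimizer

variable {x₀ : ι → ℝ} (hx₀ : ∀ z, lasso A y x₀ ≤ lasso A y z)
include hx₀

lemma sum_abs_add_dotProduct_lassoDual_le (z : ι → ℝ) :
    ∑ i, |x₀ i| + (z - x₀) ⬝ᵥ lassoDual A y x₀ ≤ ∑ i, |z i| := by
  rw [← sub_nonneg]
  refine nonneg_of_forall_nonneg_mul_add_sq_mul (c := (∑ j, ((A *ᵥ (z - x₀)) j) ^ 2) / 2)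
    fun t ht ht1 => ?_
  have hmin := hx₀ (x₀ + t • (z - x₀))
  have hconv : ∑ i, |(x₀ + t • (z - x₀)) i| ≤ (1 - t) * ∑ i, |x₀ i| + t * ∑ i, |z i| := by
    rw [show x₀ + t • (z - x₀) = (1 - t) • x₀ + t • z by module]
    exact convexOn_sum_abs.2 (mem_univ x₀) (mem_univ z) (sub_nonneg.2 ht1) ht.le
      (sub_add_cancel 1 t)
  rw [lasso_add, smul_dotProduct, Matrix.mulVec_smul] at hmin
  simp only [Pi.smul_apply, smul_eq_mul, mul_pow, ← Finset.mul_sum] at hmin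
  linarith

lemma lasso_add_abs_sub_add_le (x : ι → ℝ) (k : ι) :
    lasso A y x₀ + (|x k| - x k * lassoDual A y x₀ k) + (∑ j, ((A *ᵥ (x - x₀)) j) ^ 2) / 2 ≤
      lasso A y x := by
  classical
  have hexpand := lasso_add (A := A) (y := y) x₀ (x - x₀)
  -- the subgradient inequality at `x` with its `k`-th coordinate replaced by `0`
  have hsub := sum_abs_add_dotProduct_lassoDual_le hx₀ (x + Pi.single k (-x k))
  rw [sum_abs_add_single, add_neg_cancel, abs_zero, add_sub_right_comm, add_dotProduct,
    single_dotProduct] at hsub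
  rw [add_sub_cancel] at hexpand
  linarith

lemma exists_lasso_coordFlip_le [DecidableEq ι] {k : ι} (hk : |lassoDual A y x₀ k| = 1) {l : ℝ}
    (hl : 0 < l) :
    ∃ δ > 0, ∀ x : ι → ℝ, x k * lassoDual A y x₀ k ≤ 0 → lasso A y x < lasso A y x₀ + δ →
      lasso A y (coordFlip k l x) ≤ lasso A y x := by
  set N := ∑ j, A j k ^ 2
  have : 0 ≤ N := by positivity
  set δ := 1 / (2 * (1 + l) ^ 2 * (N + 1)) with hδ
  have hδ0 : 0 < δ := by positivity
  have hδN : 2 * (1 + l) ^ 2 * N * δ ≤ 1 := by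
    rw [hδ, mul_one_div]
    exact div_le_one_of_le₀ (by gcongr; linarith) (by positivity)
  refine ⟨δ, hδ0, fun x hx hxδ => ?_⟩
  set Q := ∑ j, ((A *ᵥ (x - x₀)) j) ^ 2
  have hQ : 0 ≤ Q := by positivity
  have hgrowth := lasso_add_abs_sub_add_le hx₀ x k
  have hxk := abs_nonneg (x k)
  refine lasso_coordFlip_le hl hx hk ?_ ?_
  · calc ((1 + l) * ∑ j, A j k * (A *ᵥ (x - x₀)) j) ^ 2 ≤ (1 + l) ^ 2 * (N * Q) := by
          rw [mul_pow]
          gcongr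
          exact Finset.sum_mul_sq_le_sq_mul_sq _ _ _
      _ ≤ (1 + l) ^ 2 * (N * (2 * δ)) := by
          gcongr
          linarith
      _ ≤ 1 := by linarith
  · calc (1 + l) ^ 2 * N * |x k| ≤ (1 + l) ^ 2 * N * δ := by
          gcongr
          linarith
      _ ≤ 1 := by linarith [show 0 ≤ (1 + l) ^ 2 * N * δ by positivity]

lemma tendsto_lassoPosterior_mul_lassoDual_nonpos {k : ι} (hk : |lassoDual A y x₀ k| = 1) :
    Tendsto (fun β => lassoPosterior A y β {x | x k * lassoDual A y x₀ k ≤ 0}) atTop (𝓝 0) := by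
  classical
  refine ENNReal.tendsto_nhds_zero.2 fun ε hε => ?_
  obtain ⟨r, hr, hrε⟩ := ENNReal.lt_iff_exists_nnreal_btwn.1 hε
  have hr0 : (0 : ℝ) < r := by exact_mod_cast hr
  obtain ⟨δ, hδ, hflip⟩ := exists_lasso_coordFlip_le hx₀ hk (inv_pos.2 hr0)
  set wrong := {x : ι → ℝ | x k * lassoDual A y x₀ k ≤ 0}
  set far := {x : ι → ℝ | lasso A y x₀ + δ ≤ lasso A y x}
  have hmeas : MeasurableSet (wrong \ far) :=
    (measurableSet_le (f := fun x : ι → ℝ => x k * _) (by fun_prop) measurable_const).diff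
      (measurableSet_le measurable_const continuous_lasso.measurable)
  have hfar : Tendsto (fun β => r + lassoPosterior A y β far) atTop (𝓝 r) := by
    simpa only [add_zero] using (tendsto_lassoPosterior_setOf_add_le x₀ hδ).const_add (r : ℝ≥0∞)
  filter_upwards [hfar.eventually_le_const hrε, eventually_ge_atTop 0] with β hβε hβ
  have hnear : lassoPosterior A y β (wrong \ far) ≤ r := by
    simpa only [inv_inv, ENNReal.ofReal_coe_nnreal] using
      lassoPosterior_le_of_lasso_coordFlip_le (inv_pos.2 hr0) hβ hmeas
        fun x hx => hflip x hx.1 (not_le.1 hx.2)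
  calc lassoPosterior A y β wrong
      ≤ lassoPosterior A y β (wrong \ far) + lassoPosterior A y β far :=
        (measure_mono (subset_union_left.trans_eq sdiff_union_self.symm)).trans
          (measure_union_le _ _)
    _ ≤ r + lassoPosterior A y β far := by gcongr
    _ ≤ ε := hβε

lemma tendsto_lassoPosterior_mul_lassoDual_pos {J : Set ι}
    (hJ : ∀ i ∈ J, |lassoDual A y x₀ i| = 1) :
    Tendsto (fun β => lassoPosterior A y β {x | ∀ i ∈ J, 0 < x i * lassoDual A y x₀ i}) atTop
      (𝓝 1) := by
  set wrong := ⋃ i ∈ J, {x : ι → ℝ | x i * lassoDual A y x₀ i ≤ 0} with hwrong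
  have hmeas : MeasurableSet wrong := .biUnion J.to_countable fun i _ =>
    measurableSet_le (f := fun x : ι → ℝ => x i * _) (by fun_prop) measurable_const
  have hcompl : {x : ι → ℝ | ∀ i ∈ J, 0 < x i * lassoDual A y x₀ i} = wrongᶜ := by
    ext x
    simp [hwrong]
  have hlim : Tendsto (fun β => lassoPosterior A y β wrong) atTop (𝓝 0) := by
    have hsum : Tendsto (fun β => ∑ i ∈ J.toFinite.toFinset,
        lassoPosterior A y β {x | x i * lassoDual A y x₀ i ≤ 0}) atTop (𝓝 0) := by
      simpa only [Finset.sum_const_zero] using tendsto_finsetSum J.toFinite.toFinset fun i hi =>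
        tendsto_lassoPosterior_mul_lassoDual_nonpos hx₀ (hJ i (J.toFinite.mem_toFinset.1 hi))
    refine tendsto_of_tendsto_of_tendsto_of_le_of_le tendsto_const_nhds hsum
      (fun _ => zero_le) fun β => ?_
    simpa only [Finite.mem_toFinset] using
      measure_biUnion_finset_le (μ := lassoPosterior A y β) J.toFinite.toFinset
        fun i => {x | x i * lassoDual A y x₀ i ≤ 0}
  have hsub : Tendsto (fun β => 1 - lassoPosterior A y β wrong) atTop (𝓝 1) := by
    simpa only [tsub_zero] using
      ENNReal.Tendsto.sub tendsto_const_nhds hlim (.inl ENNReal.one_ne_top)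
  refine hsub.congr' ?_
  filter_upwards [eventually_gt_atTop 0] with β hβ
  have := isProbabilityMeasure_lassoPosterior (A := A) (y := y) hβ
  rw [hcompl, prob_compl_eq_one_sub hmeas]

end Minimizer

lemma setIntegral_div_integral_eq_toReal_lassoPosterior (β : ℝ) (s : Set (ι → ℝ)) :
    (∫ x in s, Real.exp (-2 * β * lasso A y x)) / (∫ x, Real.exp (-2 * β * lasso A y x)) =
      (lassoPosterior A y β s).toReal := by
  rw [lassoPosterior, tilted_apply_eq_ofReal_integral, integral_div, ENNReal.toReal_ofReal]
  positivity

end Lasso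

theorem posterior_signs_match_general {ι κ : Type*} [Fintype ι] [Fintype κ] (A : Matrix κ ι ℝ)
    (y : κ → ℝ) (F : (ι → ℝ) → ℝ)
    (hF : ∀ x, F x = (∑ i, |x i|) + (∑ j, (A.mulVec x j - y j) ^ 2) / 2)
    (x₀ : ι → ℝ) (hx₀ : ∀ z, F x₀ ≤ F z)
    (ξ : ι → ℝ) (hξ : ξ = A.transpose.mulVec (y - A.mulVec x₀))
    (J : Set ι) (hJ : ∀ i ∈ J, |ξ i| = 1) :
    Tendsto (fun β : ℝ =>
        (∫ x in {x : ι → ℝ | ∀ i ∈ J, 0 < x i * ξ i}, Real.exp (-2 * β * F x)) /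
        (∫ x : ι → ℝ, Real.exp (-2 * β * F x)))
      atTop (𝓝 1) := by
  obtain rfl : F = lasso A y := funext hF
  obtain rfl : ξ = lassoDual A y x₀ := hξ
  simp only [setIntegral_div_integral_eq_toReal_lassoPosterior]
  exact (ENNReal.tendsto_toReal ENNReal.one_ne_top).comp
    (tendsto_lassoPosterior_mul_lassoDual_pos hx₀ hJ)

/-- Under invertibility of `A_{∂I}ᵀA_{∂I}`, the posterior probability that every
component of `X_β` indexed by `∂I₀ = {i : x₀ i = 0, |ξ i| = 1}` has the sign of `ξ i`
tends to `1` as `β → +∞`. -/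
theorem posterior_signs_match (p n : ℕ) (A : Matrix (Fin n) (Fin p) ℝ)
    (y : Fin n → ℝ) (F : (Fin p → ℝ) → ℝ)
    (hF : ∀ x, F x = (∑ i, |x i|) + (∑ j, (A.mulVec x j - y j) ^ 2) / 2)
    (x₀ : Fin p → ℝ) (hx₀ : ∀ z, F x₀ ≤ F z)
    (ξ : Fin p → ℝ) (hξ : ξ = A.transpose.mulVec (y - A.mulVec x₀))
    (hind : LinearIndependent ℝ
      (fun i : {i : Fin p // |ξ i| = 1} => (fun j => A j i.1 : Fin n → ℝ))) :
    Filter.Tendsto (fun β : ℝ =>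
        (∫ x in {x : Fin p → ℝ |
            ∀ i, x₀ i = 0 ∧ |ξ i| = 1 → 0 < x i * ξ i},
          Real.exp (-2 * β * F x)) /
        (∫ x : Fin p → ℝ, Real.exp (-2 * β * F x)))
      Filter.atTop (nhds 1) :=
  posterior_signs_match_general A y F hF x₀ hx₀ ξ hξ {i | x₀ i = 0 ∧ |ξ i| = 1} fun _ hi => hi.2
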